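/- For every d ≥ 3 there exists a constant C depending only on d such that for every σ-finite Borel measure μ on ℝ^d, every t > 0, and all x₁ ≠ x₂ in ℝ^d, writing x̄ = (x₁ + x₂)/2 and r = (x₁ - x₂)/2, one has (μ * q_t)(x₁, x₂) ≤ C · (μ * p_t)(x̄) · p_t(r) · |r|^{2-d} · t^{d/2}. -/

import Mathlib

open Filter MeasureTheory

/-- The standard Gaussian density `p_t(x) = (2πt)^{-d/2} exp(-|x|²/(2t))` on `ℝ^d`. -/
noncomputable def gaussDensity (d : ℕ) (t : ℝ) (x : EuclideanSpace ℝ (Fin d)) : ℝ :=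
  (2 * Real.pi * t) ^ (-(d : ℝ) / 2) * Real.exp (-‖x‖ ^ 2 / (2 * t))

/-- The covariance density
`q_t(x₁, x₂) = 2 ∫₀^t ∫ p_s(u) p_{t-s}(x₁ - u) p_{t-s}(x₂ - u) du ds`. -/
noncomputable def gaussQ (d : ℕ) (t : ℝ) (x₁ x₂ : EuclideanSpace ℝ (Fin d)) : ℝ :=
  2 * ∫ s in Set.Ioc (0:ℝ) t,
      ∫ u, gaussDensity d s u * gaussDensity d (t - s) (x₁ - u)
        * gaussDensity d (t - s) (x₂ - u) ∂volume

/-!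
Write `x₁ = y + r` and `x₂ = y - r`. By the parallelogram law `p_τ(x₁ - u) p_τ(x₂ - u)` equals
`2^{-d} p_{τ/2}(y - u) p_{τ/2}(r)`, so by the semigroup property the spatial integral defining
`q_t(x₁, x₂)` is `2^{-d} p_{(s+t)/2}(y) p_{(t-s)/2}(r)`. Here `p_{(s+t)/2}(y) ≤ 2^{d/2} p_t(y)`, and
half of the exponent of `p_{τ/2}(r)` yields `p_{τ/2}(r) ≤ 2^{d/2} exp(-|r|²/(2t)) p_τ(r)` for
`τ ≤ t`. Integrating the remaining `p_τ(r)` over all `τ > 0` gives the Green function of Brownian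
motion, a multiple of `|r|^{2-d}`; this is where `d ≥ 3` enters. The resulting pointwise bound on
`q_t` is then integrated over the translates `y - u` with `r` fixed.
-/

lemma pow_eq_rpow_half_mul_rpow_half {a : ℝ} (ha : 0 < a) (n : ℕ) :
    a ^ n = a ^ ((n:ℝ) / 2) * a ^ ((n:ℝ) / 2) := by
  rw [← Real.rpow_add ha, add_halves, Real.rpow_natCast]

section InverseGamma

variable {m c : ℝ}

lemma integral_rpow_neg_mul_exp_neg_div_Ioi (hm : 1 < m) (hc : 0 < c) :
    ∫ t in Set.Ioi (0:ℝ), t ^ (-m) * Real.exp (-c / t) =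
      (1 / c) ^ (m - 1) * Real.Gamma (m - 1) := by
  rw [← Real.integral_rpow_mul_exp_neg_mul_Ioi (sub_pos.2 hm) hc,
    ← integral_comp_rpow_Ioi _ (p := -1) (by norm_num)]
  refine setIntegral_congr_fun measurableSet_Ioi fun t (ht : 0 < t) => ?_
  simp only [smul_eq_mul, abs_neg, abs_one, one_mul]
  rw [← Real.rpow_mul ht.le, ← mul_assoc, ← Real.rpow_add ht, Real.rpow_neg_one,
    div_inv_eq_mul]
  ring_nf

lemma integrableOn_rpow_neg_mul_exp_neg_div_Ioi (hm : 1 < m) (hc : 0 < c) :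
    IntegrableOn (fun t : ℝ => t ^ (-m) * Real.exp (-c / t)) (Set.Ioi 0) := by
  have hΓ : 0 < Real.Gamma (m - 1) := Real.Gamma_pos_of_pos (sub_pos.2 hm)
  refine .of_integral_ne_zero ?_
  rw [integral_rpow_neg_mul_exp_neg_div_Ioi hm hc]
  exact (mul_pos (by positivity) hΓ).ne'

end InverseGamma

section GaussDensity

variable {d : ℕ} {s t : ℝ} {x : EuclideanSpace ℝ (Fin d)}

lemma gaussDensity_nonneg (ht : 0 ≤ t) (x : EuclideanSpace ℝ (Fin d)) :
    0 ≤ gaussDensity d t x := by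
  unfold gaussDensity
  positivity

lemma integral_gaussDensity (ht : 0 < t) : ∫ x, gaussDensity d t x = 1 := by
  have hexp (x : EuclideanSpace ℝ (Fin d)) :
      Real.exp (-‖x‖ ^ 2 / (2 * t)) = Real.exp (-(2 * t)⁻¹ * ‖x‖ ^ 2) := by
    ring_nf
  simp only [gaussDensity, hexp]
  rw [integral_const_mul, GaussianFourier.integral_rexp_neg_mul_sq_norm (by positivity),
    finrank_euclideanSpace_fin, div_inv_eq_mul, neg_div, Real.rpow_neg (by positivity),
    show Real.pi * (2 * t) = 2 * Real.pi * t by ring]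
  exact inv_mul_cancel₀ (by positivity)

/-- Completing the square; the last factor is the density at time `s` of the Brownian bridge from
`0` to `x` of length `s + t`. -/
lemma gaussDensity_mul_gaussDensity_sub (hs : 0 < s) (ht : 0 < t)
    (x u : EuclideanSpace ℝ (Fin d)) :
    gaussDensity d s u * gaussDensity d t (x - u) =
      gaussDensity d (s + t) x * gaussDensity d (s * t / (s + t)) (u - (s / (s + t)) • x) := by
  have hconst : (2 * Real.pi * s) ^ (-(d:ℝ) / 2) * (2 * Real.pi * t) ^ (-(d:ℝ) / 2) =
      (2 * Real.pi * (s + t)) ^ (-(d:ℝ) / 2) *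
        (2 * Real.pi * (s * t / (s + t))) ^ (-(d:ℝ) / 2) := by
    rw [← Real.mul_rpow (by positivity) (by positivity),
      ← Real.mul_rpow (by positivity) (by positivity)]
    congr 1
    field_simp
  have hexp : -‖u‖ ^ 2 / (2 * s) + -‖x - u‖ ^ 2 / (2 * t) =
      -‖x‖ ^ 2 / (2 * (s + t)) + -‖u - (s / (s + t)) • x‖ ^ 2 / (2 * (s * t / (s + t))) := by
    rw [norm_sub_sq_real x u, norm_sub_sq_real u, norm_smul, inner_smul_right, mul_pow,
      Real.norm_eq_abs, sq_abs, real_inner_comm]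
    field_simp
    ring
  simp only [gaussDensity]
  rw [mul_mul_mul_comm, hconst, mul_mul_mul_comm (_ ^ _) (Real.exp _), ← Real.exp_add,
    ← Real.exp_add, hexp]

lemma integral_gaussDensity_mul_gaussDensity_sub (hs : 0 < s) (ht : 0 < t)
    (x : EuclideanSpace ℝ (Fin d)) :
    ∫ u, gaussDensity d s u * gaussDensity d t (x - u) = gaussDensity d (s + t) x := by
  simp only [gaussDensity_mul_gaussDensity_sub hs ht]
  rw [integral_const_mul, integral_sub_right_eq_self (gaussDensity d (s * t / (s + t))),
    integral_gaussDensity (by positivity), mul_one]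

lemma gaussDensity_half (ht : 0 ≤ t) (x : EuclideanSpace ℝ (Fin d)) :
    gaussDensity d (t / 2) x =
      2 ^ ((d:ℝ) / 2) * Real.exp (-‖x‖ ^ 2 / (2 * t)) * gaussDensity d t x := by
  have hconst : (2 * Real.pi * (t / 2)) ^ (-(d:ℝ) / 2) =
      2 ^ ((d:ℝ) / 2) * (2 * Real.pi * t) ^ (-(d:ℝ) / 2) := by
    rw [show 2 * Real.pi * (t / 2) = 2⁻¹ * (2 * Real.pi * t) by ring,
      Real.mul_rpow (by norm_num) (by positivity), Real.inv_rpow (by norm_num), neg_div,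
      Real.rpow_neg (by norm_num), inv_inv]
  have hexp : -‖x‖ ^ 2 / (2 * (t / 2)) = -‖x‖ ^ 2 / (2 * t) + -‖x‖ ^ 2 / (2 * t) := by
    ring
  simp only [gaussDensity]
  rw [hconst, hexp, Real.exp_add]
  ring

lemma gaussDensity_add_mul_gaussDensity_sub (ht : 0 ≤ t) (y r : EuclideanSpace ℝ (Fin d)) :
    gaussDensity d t (y + r) * gaussDensity d t (y - r) =
      gaussDensity d (t / 2) y * gaussDensity d (t / 2) r / 2 ^ d := by
  have hexp : Real.exp (-‖y + r‖ ^ 2 / (2 * t)) * Real.exp (-‖y - r‖ ^ 2 / (2 * t)) =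
      Real.exp (-‖y‖ ^ 2 / (2 * t)) ^ 2 * Real.exp (-‖r‖ ^ 2 / (2 * t)) ^ 2 := by
    rw [← Real.exp_nat_mul, ← Real.exp_nat_mul, ← Real.exp_add, ← Real.exp_add,
      norm_add_sq_real, norm_sub_sq_real]
    ring_nf
  rw [gaussDensity_half ht, gaussDensity_half ht,
    pow_eq_rpow_half_mul_rpow_half zero_lt_two]
  simp only [gaussDensity]
  rw [mul_mul_mul_comm, hexp]
  field_simp

lemma gaussDensity_le_rpow_mul_gaussDensity {c : ℝ} (hs : 0 < s) (hst : s ≤ t) (htc : t ≤ c * s)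
    (x : EuclideanSpace ℝ (Fin d)) :
    gaussDensity d s x ≤ c ^ ((d:ℝ) / 2) * gaussDensity d t x := by
  have ht : 0 < t := hs.trans_le hst
  have hc : 0 < c := pos_of_mul_pos_left (ht.trans_le htc) hs.le
  have hconst : (2 * Real.pi * s) ^ (-(d:ℝ) / 2) ≤
      c ^ ((d:ℝ) / 2) * (2 * Real.pi * t) ^ (-(d:ℝ) / 2) := by
    rw [← neg_neg ((d:ℝ) / 2), Real.rpow_neg hc.le, ← Real.inv_rpow hc.le, ← neg_div,
      ← Real.mul_rpow (by positivity) (by positivity)]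
    refine Real.rpow_le_rpow_of_nonpos (by positivity) ?_ ?_
    · rw [inv_mul_le_iff₀ hc]
      linear_combination 2 * Real.pi * htc
    · exact div_nonpos_of_nonpos_of_nonneg (neg_nonpos.2 d.cast_nonneg) zero_le_two
  simp only [gaussDensity, neg_div _ (‖x‖ ^ 2)]
  rw [← mul_assoc]
  gcongr

lemma gaussDensity_mul_rpow (ht : 0 < t) (x : EuclideanSpace ℝ (Fin d)) :
    gaussDensity d t x * (2 * Real.pi * t) ^ ((d:ℝ) / 2) = Real.exp (-‖x‖ ^ 2 / (2 * t)) := by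
  rw [gaussDensity, neg_div, Real.rpow_neg (by positivity)]
  field_simp

lemma gaussDensity_eq_rpow_neg_mul_exp_neg_div (ht : 0 ≤ t) (x : EuclideanSpace ℝ (Fin d)) :
    gaussDensity d t x = (2 * Real.pi) ^ (-(d:ℝ) / 2) *
      (t ^ (-((d:ℝ) / 2)) * Real.exp (-(‖x‖ ^ 2 / 2) / t)) := by
  rw [gaussDensity, Real.mul_rpow (by positivity) ht, neg_div _ (d:ℝ), mul_assoc]
  ring_nf

lemma integrableOn_gaussDensity_Ioi (hd : 3 ≤ d) (hx : x ≠ 0) :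
    IntegrableOn (fun t => gaussDensity d t x) (Set.Ioi 0) := by
  have hd' : (3:ℝ) ≤ d := by exact_mod_cast hd
  refine IntegrableOn.congr_fun ?_
    (fun t (ht : 0 < t) => (gaussDensity_eq_rpow_neg_mul_exp_neg_div ht.le x).symm)
    measurableSet_Ioi
  exact (integrableOn_rpow_neg_mul_exp_neg_div_Ioi (by linarith) (by positivity)).const_mul _

lemma integral_gaussDensity_Ioi (hd : 3 ≤ d) (hx : x ≠ 0) :
    ∫ t in Set.Ioi (0:ℝ), gaussDensity d t x =
      Real.Gamma ((d:ℝ) / 2 - 1) / (2 * Real.pi ^ ((d:ℝ) / 2)) * ‖x‖ ^ ((2:ℝ) - d) := by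
  have hd' : (3:ℝ) ≤ d := by exact_mod_cast hd
  have hx' : 0 < ‖x‖ := norm_pos_iff.2 hx
  have hpow : (1 / (‖x‖ ^ 2 / 2)) ^ ((d:ℝ) / 2 - 1) =
      2 ^ ((d:ℝ) / 2) / 2 * ‖x‖ ^ ((2:ℝ) - d) := by
    rw [one_div_div, Real.div_rpow (by norm_num) (by positivity),
      Real.rpow_sub_one (by norm_num), ← Real.rpow_natCast_mul hx'.le, div_eq_mul_inv _ (‖x‖ ^ _),
      ← Real.rpow_neg hx'.le]
    push_cast
    ring_nf
  rw [setIntegral_congr_fun measurableSet_Ioi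
      (fun t (ht : 0 < t) => gaussDensity_eq_rpow_neg_mul_exp_neg_div ht.le x),
    integral_const_mul, integral_rpow_neg_mul_exp_neg_div_Ioi (by linarith) (by positivity), hpow,
    neg_div, Real.rpow_neg (by positivity), Real.mul_rpow (by norm_num) (by positivity)]
  field_simp

end GaussDensity

section GaussQ

variable {d : ℕ} {s t : ℝ} {r : EuclideanSpace ℝ (Fin d)}

lemma integral_gaussDensity_mul_mul (hs : 0 < s) (ht : 0 < t)
    (y r : EuclideanSpace ℝ (Fin d)) :
    ∫ u, gaussDensity d s u * gaussDensity d t (y + r - u) * gaussDensity d t (y - r - u) =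
      gaussDensity d (s + t / 2) y * gaussDensity d (t / 2) r / 2 ^ d := by
  have hsplit (u : EuclideanSpace ℝ (Fin d)) :
      gaussDensity d s u * gaussDensity d t (y + r - u) * gaussDensity d t (y - r - u) =
        gaussDensity d s u * gaussDensity d (t / 2) (y - u) *
          (gaussDensity d (t / 2) r / 2 ^ d) := by
    rw [mul_assoc, add_sub_right_comm, sub_right_comm,
      gaussDensity_add_mul_gaussDensity_sub ht.le]
    ring
  simp only [hsplit]
  rw [integral_mul_const, integral_gaussDensity_mul_gaussDensity_sub hs (by positivity),
    mul_div_assoc]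

lemma integral_gaussDensity_mul_mul_le (hs : 0 < s) (ht : 0 < t)
    (y r : EuclideanSpace ℝ (Fin d)) :
    ∫ u, gaussDensity d s u * gaussDensity d t (y + r - u) * gaussDensity d t (y - r - u) ≤
      gaussDensity d (s + t) y * Real.exp (-‖r‖ ^ 2 / (2 * (s + t))) * gaussDensity d t r := by
  have hy : gaussDensity d (s + t / 2) y ≤ 2 ^ ((d:ℝ) / 2) * gaussDensity d (s + t) y :=
    gaussDensity_le_rpow_mul_gaussDensity (by positivity) (by linarith) (by linarith) y
  have hr : gaussDensity d (t / 2) r ≤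
      2 ^ ((d:ℝ) / 2) * Real.exp (-‖r‖ ^ 2 / (2 * (s + t))) * gaussDensity d t r := by
    have := gaussDensity_nonneg ht.le r
    rw [gaussDensity_half ht.le, neg_div, neg_div]
    gcongr
    linarith
  have hr_nonneg : 0 ≤ gaussDensity d (t / 2) r := gaussDensity_nonneg (by positivity) r
  have hy_nonneg : 0 ≤ gaussDensity d (s + t) y := gaussDensity_nonneg (by positivity) y
  calc ∫ u, gaussDensity d s u * gaussDensity d t (y + r - u) * gaussDensity d t (y - r - u)
      = gaussDensity d (s + t / 2) y * gaussDensity d (t / 2) r / 2 ^ d :=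
        integral_gaussDensity_mul_mul hs ht y r
    _ ≤ 2 ^ ((d:ℝ) / 2) * gaussDensity d (s + t) y *
          (2 ^ ((d:ℝ) / 2) * Real.exp (-‖r‖ ^ 2 / (2 * (s + t))) * gaussDensity d t r) / 2 ^ d := by
        gcongr
    _ = gaussDensity d (s + t) y * Real.exp (-‖r‖ ^ 2 / (2 * (s + t))) * gaussDensity d t r := by
        rw [pow_eq_rpow_half_mul_rpow_half zero_lt_two]
        field_simp

lemma gaussQ_eq_integral_Ioo (ht : 0 ≤ t) (x₁ x₂ : EuclideanSpace ℝ (Fin d)) :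
    gaussQ d t x₁ x₂ = 2 * ∫ τ in Set.Ioo 0 t,
      ∫ u, gaussDensity d (t - τ) u * gaussDensity d τ (x₁ - u) * gaussDensity d τ (x₂ - u) := by
  have hreflect := intervalIntegral.integral_comp_sub_left (a := 0) (b := t) (fun τ =>
    ∫ u, gaussDensity d (t - τ) u * gaussDensity d τ (x₁ - u) * gaussDensity d τ (x₂ - u)) t
  simp only [sub_sub_cancel, sub_self, sub_zero] at hreflect
  rw [gaussQ, ← intervalIntegral.integral_of_le ht, hreflect,
    intervalIntegral.integral_of_le ht, integral_Ioc_eq_integral_Ioo]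

lemma gaussQ_add_sub_le_integral (ht : 0 < t) (y : EuclideanSpace ℝ (Fin d))
    (hr : IntegrableOn (fun τ => gaussDensity d τ r) (Set.Ioi 0)) :
    gaussQ d t (y + r) (y - r) ≤ 2 * (gaussDensity d t y * Real.exp (-‖r‖ ^ 2 / (2 * t)) *
      ∫ τ in Set.Ioi (0:ℝ), gaussDensity d τ r) := by
  have hy : 0 ≤ gaussDensity d t y := gaussDensity_nonneg ht.le y
  have hspace : ∀ᵐ τ ∂volume.restrict (Set.Ioo 0 t),
      ∫ u, gaussDensity d (t - τ) u * gaussDensity d τ (y + r - u) * gaussDensity d τ (y - r - u) ≤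
        gaussDensity d t y * Real.exp (-‖r‖ ^ 2 / (2 * t)) * gaussDensity d τ r := by
    filter_upwards [ae_restrict_mem measurableSet_Ioo] with τ hτ
    simpa only [sub_add_cancel] using
      integral_gaussDensity_mul_mul_le (sub_pos.2 hτ.2) hτ.1 y r
  have hspace_nonneg : ∀ᵐ τ ∂volume.restrict (Set.Ioo 0 t), 0 ≤
      ∫ u, gaussDensity d (t - τ) u * gaussDensity d τ (y + r - u) *
        gaussDensity d τ (y - r - u) := by
    filter_upwards [ae_restrict_mem measurableSet_Ioo] with τ hτ
    exact integral_nonneg fun u => mul_nonneg (mul_nonneg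
      (gaussDensity_nonneg (sub_pos.2 hτ.2).le _) (gaussDensity_nonneg hτ.1.le _))
      (gaussDensity_nonneg hτ.1.le _)
  have htail : ∫ τ in Set.Ioo 0 t, gaussDensity d τ r ≤ ∫ τ in Set.Ioi 0, gaussDensity d τ r := by
    refine setIntegral_mono_set hr ?_ Set.Ioo_subset_Ioi_self.eventuallyLE
    filter_upwards [ae_restrict_mem measurableSet_Ioi] with τ hτ
    exact gaussDensity_nonneg hτ.le r
  rw [gaussQ_eq_integral_Ioo ht.le]
  gcongr 2 * ?_
  calc ∫ τ in Set.Ioo 0 t, ∫ u, gaussDensity d (t - τ) u * gaussDensity d τ (y + r - u) *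
          gaussDensity d τ (y - r - u)
      ≤ ∫ τ in Set.Ioo 0 t,
          gaussDensity d t y * Real.exp (-‖r‖ ^ 2 / (2 * t)) * gaussDensity d τ r :=
        integral_mono_of_nonneg hspace_nonneg
          ((hr.mono_set Set.Ioo_subset_Ioi_self).const_mul _) hspace
    _ = gaussDensity d t y * Real.exp (-‖r‖ ^ 2 / (2 * t)) *
          ∫ τ in Set.Ioo 0 t, gaussDensity d τ r := integral_const_mul _ _
    _ ≤ _ := by gcongr

lemma gaussQ_add_sub_le (hd : 3 ≤ d) (ht : 0 < t) (y : EuclideanSpace ℝ (Fin d)) (hr : r ≠ 0) :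
    gaussQ d t (y + r) (y - r) ≤ 2 ^ ((d:ℝ) / 2) * Real.Gamma ((d:ℝ) / 2 - 1) *
      gaussDensity d t y * (gaussDensity d t r * ‖r‖ ^ ((2:ℝ) - d) * t ^ ((d:ℝ) / 2)) := by
  refine (gaussQ_add_sub_le_integral ht y (integrableOn_gaussDensity_Ioi hd hr)).trans_eq ?_
  rw [integral_gaussDensity_Ioi hd hr, ← gaussDensity_mul_rpow ht,
    Real.mul_rpow (by positivity) ht.le, Real.mul_rpow (by norm_num) (by positivity)]
  field_simp

end GaussQ

theorem gaussQ_conv_bound_high_dim_general {d : ℕ} (hd : 3 ≤ d)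
    (μ : Measure (EuclideanSpace ℝ (Fin d))) {t : ℝ} (ht : 0 < t)
    {x₁ x₂ : EuclideanSpace ℝ (Fin d)} (hne : x₁ ≠ x₂) :
    ∫⁻ u, ENNReal.ofReal (gaussQ d t (x₁ - u) (x₂ - u)) ∂μ ≤
      ENNReal.ofReal (2 ^ ((d:ℝ) / 2) * Real.Gamma ((d:ℝ) / 2 - 1))
        * (∫⁻ u, ENNReal.ofReal (gaussDensity d t ((2:ℝ)⁻¹ • (x₁ + x₂) - u)) ∂μ)
        * ENNReal.ofReal (gaussDensity d t ((2:ℝ)⁻¹ • (x₁ - x₂))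
            * ‖(2:ℝ)⁻¹ • (x₁ - x₂)‖ ^ ((2:ℝ) - d) * t ^ ((d:ℝ) / 2)) := by
  set y := (2:ℝ)⁻¹ • (x₁ + x₂) with hy
  set r := (2:ℝ)⁻¹ • (x₁ - x₂) with hr
  have hr0 : r ≠ 0 := smul_ne_zero (by norm_num) (sub_ne_zero.2 hne)
  have hC : 0 ≤ 2 ^ ((d:ℝ) / 2) * Real.Gamma ((d:ℝ) / 2 - 1) := by
    have hd' : (3:ℝ) ≤ d := by exact_mod_cast hd
    exact mul_nonneg (by positivity) (Real.Gamma_nonneg_of_nonneg (by linarith))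
  rw [← lintegral_const_mul' _ _ ENNReal.ofReal_ne_top,
    ← lintegral_mul_const' _ _ ENNReal.ofReal_ne_top]
  refine lintegral_mono fun u => ?_
  have hx₁ : x₁ - u = y - u + r := by rw [hy, hr]; module
  have hx₂ : x₂ - u = y - u - r := by rw [hy, hr]; module
  have hp := gaussDensity_nonneg ht.le (y - u)
  simp only [hx₁, hx₂]
  rw [← ENNReal.ofReal_mul hC, ← ENNReal.ofReal_mul (mul_nonneg hC hp)]
  exact ENNReal.ofReal_le_ofReal (gaussQ_add_sub_le hd ht (y - u) hr0)

/-- **Lemma 3.3(ii).** For `d ≥ 3` there is a constant `C` depending only on `d` such that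
for every σ-finite `μ`, every `t > 0` and all `x₁ ≠ x₂`, with `x̄ = (x₁+x₂)/2`,
`r = (x₁-x₂)/2`: `(μ * q_t)(x₁, x₂) ≤ C (μ * p_t)(x̄) p_t(r) |r|^{2-d} t^{d/2}`. -/
theorem gaussQ_conv_bound_high_dim (d : ℕ) (hd : 3 ≤ d) :
    ∃ C : ℝ, 0 < C ∧
      ∀ (μ : Measure (EuclideanSpace ℝ (Fin d))), SigmaFinite μ →
      ∀ t : ℝ, 0 < t → ∀ x₁ x₂ : EuclideanSpace ℝ (Fin d), x₁ ≠ x₂ →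
      ∫⁻ u, ENNReal.ofReal (gaussQ d t (x₁ - u) (x₂ - u)) ∂μ ≤
        ENNReal.ofReal C
          * (∫⁻ u, ENNReal.ofReal (gaussDensity d t ((2:ℝ)⁻¹ • (x₁ + x₂) - u)) ∂μ)
          * ENNReal.ofReal (gaussDensity d t ((2:ℝ)⁻¹ • (x₁ - x₂))
              * ‖(2:ℝ)⁻¹ • (x₁ - x₂)‖ ^ ((2:ℝ) - d) * t ^ ((d:ℝ) / 2)) := by
  have hd' : (3:ℝ) ≤ d := by exact_mod_cast hd
  have hΓ : 0 < Real.Gamma ((d:ℝ) / 2 - 1) := Real.Gamma_pos_of_pos (by linarith)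
  exact ⟨_, mul_pos (by positivity) hΓ, fun μ _ _ ht _ _ hne =>
    gaussQ_conv_bound_high_dim_general hd μ ht hne⟩
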